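/- Let f ∈ C(𝕋), α > 0, n ∈ ℕ with n ≥ 1, and set c(α) = 1 + 3/(2α²). Then E_{n-1}(f) ≤ c(α)·W₂*(f, χ_{α/(2n)}²). -/

import Mathlib

/-!
Write `h = α/(2n)` and `W = W₂*(f, χ_h²)`. The proof smooths `f` to a `C²` function `g` and applies
Favard's sharp inequality `E_{n-1}(g) ≤ ‖g''‖ / (32 n²)` to `g`.

**Smoothing.** Take `g = ∫₀^h ρ(u) (f * χ_u²) du` with the probability density
`ρ(u) = 12 h⁻⁴ u² (h - u)`. As an average of the `f * χ_u²`, it satisfies `‖f - g‖ ≤ W`. Since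
`(f * χ_u²)''(t) = u⁻² (f(t+u) - 2f(t) + f(t-u))`, the weight `h - u` left after cancelling `u²`
is again that of a triangle average, whence `g'' = 12 h⁻² (f * χ_h² - f)` and `‖g''‖ ≤ 12 h⁻² W`.
So `E_{n-1}(f) ≤ W + 12 h⁻² W / (32 n²) = (1 + 3/(2α²)) W`. Everything is expressed through
iterated primitives of `f`, by `second_difference`.

**Favard's inequality** (`favard`). Two integrations by parts give
`g(x) = ∫g - ∫₀¹ B(t) g''(x - t) dt` with `B(t) = (t - 1/2)²/2` on `[0,1]`. Replacing `B` by a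
trigonometric polynomial `T` of degree `< n` in this formula gives an approximant, with error at
most `‖g''‖ ∫₀¹ |B - T|`. Let `T` interpolate `B` at the zeros of `cos 2πnt`. If `B - T` has the
same sign as `cos 2πnt`, then `∫ |B - T| = ∫ (B - T) sgn cos 2πnt = ∫ B sgn cos 2πnt = 1/(32 n²)`,
because the sign function is orthogonal to trigonometric polynomials of degree `< n`.

**The sign of `B - T`** (`abs_interpErr_bker`). In the variable `z = 1 + cos 2πt ≥ 0`, `T` is the
Lagrange interpolant at the `n` nonnegative roots of the polynomial `cos 2πnt`. For a polynomial
with nonnegative coefficients, synthetic division shows that the interpolation error is the nodal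
polynomial times a polynomial with nonnegative coefficients (`exists_quotient_nonneg`), so it has
the required sign; this passes to pointwise limits. Finally `B` is such a limit: with
`θ = π(2t - 1)`, so `z = 1 - cos θ`, the half-angle map `w ↦ 1 - √(1 - w/2)` sends
`1 - cos θ` to `1 - cos (θ/2)` and is a limit of polynomials with nonnegative coefficients, and
`4^k (1 - cos (θ/2^k)) → θ²/2 = 4π² B(t)`.
-/

open MeasureTheory Real

/-- Uniform (sup) norm of a real function. -/
noncomputable def unorm (f : ℝ → ℝ) : ℝ := ⨆ u : ℝ, |f u|

/-- Convolution of two real functions. -/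
noncomputable def conv (f g : ℝ → ℝ) : ℝ → ℝ := fun t => ∫ u : ℝ, f u * g (t - u)

/-- Normalized characteristic function of `(-h/2, h/2)`. -/
noncomputable def chi (h : ℝ) : ℝ → ℝ := fun t => if -h/2 < t ∧ t < h/2 then 1/h else 0

/-- Convolution powers `χ_h^k` (defined for `k ≥ 1`; junk value `0` at `k = 0`). -/
noncomputable def chiPow (h : ℝ) : ℕ → (ℝ → ℝ)
  | 0 => fun _ => 0
  | 1 => chi h
  | (k+2) => conv (chiPow h (k+1)) (chi h)

/-- Special modulus of continuity `W₂(f, χ_h^k) = ‖f - f*χ_h^k‖`. -/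
noncomputable def W2 (f : ℝ → ℝ) (h : ℝ) (k : ℕ) : ℝ :=
  unorm (fun t => f t - conv f (chiPow h k) t)

/-- `W₂*(f, χ_h^k) = sup_{0 < u ≤ h} W₂(f, χ_u^k)`. -/
noncomputable def W2star (f : ℝ → ℝ) (h : ℝ) (k : ℕ) : ℝ :=
  ⨆ u : Set.Ioc (0:ℝ) h, W2 f u.1 k

/-- Second Peetre K-functional: infimum over twice continuously differentiable
1-periodic functions `g` of `‖f - g‖ + h² ‖D²g‖`. -/
noncomputable def K2 (f : ℝ → ℝ) (h : ℝ) : ℝ :=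
  ⨅ g : {g : ℝ → ℝ // ContDiff ℝ 2 g ∧ Function.Periodic g 1},
    unorm (fun t => f t - g.1 t) + h^2 * unorm (iteratedDeriv 2 g.1)

/-- Generalized K-functional `K̃₂(f, h₁, h₂)`. -/
noncomputable def Ktilde2 (f : ℝ → ℝ) (h1 h2 : ℝ) : ℝ :=
  ⨅ p : {p : (ℝ → ℝ) × (ℝ → ℝ) //
      (ContDiff ℝ 1 p.1 ∧ Function.Periodic p.1 1) ∧
      (ContDiff ℝ 2 p.2 ∧ Function.Periodic p.2 1)},
    unorm (fun t => f t - p.1.1 t) + h1 * unorm (deriv (fun t => p.1.1 t - p.1.2 t))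
      + h2^2 * unorm (iteratedDeriv 2 p.1.2)

/-- Classical second modulus of smoothness. -/
noncomputable def omega2 (f : ℝ → ℝ) (h : ℝ) : ℝ :=
  ⨆ u : Set.Ioc (0:ℝ) h, ⨆ t : ℝ, |f (t + u.1) - 2 * f t + f (t - u.1)|

/-- `τ` is a real 1-periodic trigonometric polynomial of degree at most `n - 1`. -/
def IsTrigPolyDegLT (n : ℕ) (τ : ℝ → ℝ) : Prop :=
  ∃ a b : ℕ → ℝ, ∀ t : ℝ, τ t =
    ∑ j ∈ Finset.range n, (a j * Real.cos (2 * Real.pi * j * t) + b j * Real.sin (2 * Real.pi * j * t))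

/-- Best approximation `E_{n-1}(f)` by trigonometric polynomials of degree at most `n-1`. -/
noncomputable def bestApprox (n : ℕ) (f : ℝ → ℝ) : ℝ :=
  ⨅ τ : {τ : ℝ → ℝ // IsTrigPolyDegLT n τ}, unorm (fun t => f t - τ.1 t)

/-! ### Sign of the interpolation error -/

open Polynomial in
lemma nonneg_coeff_divByMonic {p : ℝ[X]} (hp : ∀ i, 0 ≤ p.coeff i) {a : ℝ} (ha : 0 ≤ a) (i : ℕ) :
    0 ≤ (p /ₘ (X - C a)).coeff i := by
  rw [coeff_divByMonic_X_sub_C]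
  exact Finset.sum_nonneg fun j _ => mul_nonneg (pow_nonneg ha _) (hp j)

lemma eval_nonneg_of_coeff {p : Polynomial ℝ} (hp : ∀ i, 0 ≤ p.coeff i) {z : ℝ} (hz : 0 ≤ z) :
    0 ≤ p.eval z := by
  rw [Polynomial.eval_eq_sum_range]
  exact Finset.sum_nonneg fun j _ => mul_nonneg (hp j) (pow_nonneg hz _)

open Polynomial in
/-- Dividing a polynomial with nonnegative coefficients by a product of factors `X - a`, `a ≥ 0`,
leaves a quotient with nonnegative coefficients (iterated synthetic division). -/
lemma exists_quotient_nonneg (s : Finset ℝ) (hs : ∀ a ∈ s, 0 ≤ a) {p : ℝ[X]}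
    (hp : ∀ i, 0 ≤ p.coeff i) :
    ∃ Q R : ℝ[X], (∀ i, 0 ≤ Q.coeff i) ∧ R.degree < s.card ∧
      p = (∏ a ∈ s, (X - C a)) * Q + R := by
  induction s using Finset.induction_on with
  | empty => exact ⟨p, 0, hp, by simp, by simp⟩
  | insert a s has ih =>
    obtain ⟨Q, R, hQ, hR, h⟩ := ih fun b hb => hs b (Finset.mem_insert_of_mem hb)
    refine ⟨Q /ₘ (X - C a), C (Q.eval a) * (∏ a ∈ s, (X - C a)) + R,
      nonneg_coeff_divByMonic hQ (hs a (Finset.mem_insert_self _ _)), ?_, ?_⟩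
    · rw [Finset.card_insert_of_notMem has]
      have h1 : (∏ a ∈ s, (X - C a)).degree = (s.card : WithBot ℕ) := by
        rw [degree_prod]; simp
      refine (degree_add_le _ _).trans_lt (max_lt ?_ ?_)
      · refine (degree_mul_le _ _).trans_lt ?_
        rw [h1]
        refine (add_le_add_left degree_C_le _).trans_lt ?_
        rw [zero_add]
        exact_mod_cast Nat.lt_succ_self _
      · exact hR.trans (by exact_mod_cast Nat.lt_succ_self _)
    · rw [Finset.prod_insert has]
      have h2 := modByMonic_add_div Q (X - C a)
      rw [modByMonic_X_sub_C_eq_C_eval] at h2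
      conv_lhs => rw [h, ← h2]
      ring

/-- The variable `z = 1 + cos 2πt`, in which even trigonometric polynomials are polynomials. -/
noncomputable def zvar (t : ℝ) : ℝ := 1 + cos (2 * π * t)

lemma zvar_nonneg (t : ℝ) : 0 ≤ zvar t := by
  unfold zvar; linarith [neg_one_le_cos (2 * π * t)]

/-- The points `(2i+1)/(4n)`, `0 ≤ i < n`: the zeros of `cos 2πnt` in `(0, 1/2)`. -/
noncomputable def node (n i : ℕ) : ℝ := (2 * i + 1) / (4 * n)

lemma zvar_node (n i : ℕ) : zvar (node n i) = 1 + cos ((2 * i + 1) * π / (2 * n)) := by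
  unfold zvar node
  congr 2
  ring

lemma node_mem {n i : ℕ} (hi : i < n) : node n i ∈ Set.Icc (0 : ℝ) 1 := by
  have h : (i : ℝ) + 1 ≤ n := by exact_mod_cast hi
  have h0 : (0 : ℝ) ≤ i := by positivity
  unfold node
  constructor
  · positivity
  · rw [div_le_one (by linarith)]; linarith

lemma injOn_zvar_node (n : ℕ) :
    Set.InjOn (fun i => zvar (node n i)) (Finset.range n) := by
  have h := (Finset.range n).nodup_map_iff_injOn.mp (Polynomial.Chebyshev.roots_T_real_nodup n)
  intro i hi j hj hij
  refine h hi hj ?_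
  simp only [zvar_node] at hij
  linarith

/-- Up to a positive factor, `cos 2πnt` is the monic polynomial in `z` vanishing at the nodes. -/
lemma prod_zvar (n : ℕ) (t : ℝ) :
    cos (2 * π * n * t) =
      2 ^ (n - 1) * ∏ a ∈ (Finset.range n).image (fun i => zvar (node n i)), (zvar t - a) := by
  have h := (Polynomial.Chebyshev.T ℝ n).C_leadingCoeff_mul_prod_multiset_X_sub_C (by
    rw [Polynomial.Chebyshev.roots_T_real, Polynomial.Chebyshev.natDegree_T, Finset.card_val,
      Finset.card_image_of_injOn
        ((Finset.range n).nodup_map_iff_injOn.mp (Polynomial.Chebyshev.roots_T_real_nodup n))]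
    simp)
  rw [Polynomial.Chebyshev.roots_T_real] at h
  have h2 := congrArg (Polynomial.eval (cos (2 * π * t))) h
  rw [Polynomial.Chebyshev.T_real_cos] at h2
  have e : cos (2 * π * n * t) = cos (((n : ℤ) : ℝ) * (2 * π * t)) := by
    congr 1; push_cast; ring
  rw [e, ← h2]
  rw [Finset.prod_image (injOn_zvar_node n)]
  rw [Polynomial.eval_mul, Polynomial.eval_C, Polynomial.Chebyshev.leadingCoeff_T]
  congr 1
  rw [← Finset.prod_eq_multiset_prod, Polynomial.eval_prod, Finset.prod_image
    ((Finset.range n).nodup_map_iff_injOn.mp (Polynomial.Chebyshev.roots_T_real_nodup n))]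
  refine Finset.prod_congr rfl fun i _ => ?_
  rw [zvar_node]
  simp [zvar]

/-- The error at `t` of interpolating `F` at the nodes by a polynomial in `z` of degree `< n`. -/
noncomputable def interpErr (n : ℕ) (F : ℝ → ℝ) (t : ℝ) : ℝ :=
  F t - (Lagrange.interpolate (Finset.range n) (fun i => zvar (node n i))
    (fun i => F (node n i))).eval (zvar t)

lemma interpErr_eq (n : ℕ) (F : ℝ → ℝ) (t : ℝ) :
    interpErr n F t = F t - ∑ i ∈ Finset.range n, F (node n i) *
      (Lagrange.basis (Finset.range n) (fun i => zvar (node n i)) i).eval (zvar t) := by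
  unfold interpErr
  rw [Lagrange.interpolate_apply, Polynomial.eval_finsetSum]
  simp

/-- The sign of `cos 2πnt`. -/
noncomputable def psi (n : ℕ) (t : ℝ) : ℝ := Real.sign (cos (2 * π * n * t))

/-- Polynomials with nonnegative coefficients in the variable `z = 1 + cos 2πt`. -/
def posPoly : Subsemiring (ℝ → ℝ) where
  carrier := {F | ∃ p : Polynomial ℝ, (∀ i, 0 ≤ p.coeff i) ∧ ∀ t, F t = p.eval (zvar t)}
  mul_mem' := by
    rintro F G ⟨p, hp, hF⟩ ⟨q, hq, hG⟩
    refine ⟨p * q, fun i => ?_, fun t => by simp [hF, hG]⟩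
    rw [Polynomial.coeff_mul]
    exact Finset.sum_nonneg fun j _ => mul_nonneg (hp _) (hq _)
  one_mem' := ⟨1, fun i => by rw [Polynomial.coeff_one]; split_ifs <;> simp, fun t => by simp⟩
  add_mem' := by
    rintro F G ⟨p, hp, hF⟩ ⟨q, hq, hG⟩
    exact ⟨p + q, fun i => by rw [Polynomial.coeff_add]; exact add_nonneg (hp _) (hq _),
      fun t => by simp [hF, hG]⟩
  zero_mem' := ⟨0, fun i => by simp, fun t => by simp⟩

/-- Pointwise limits of polynomials in `z = 1 + cos 2πt` with nonnegative coefficients. -/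
def posClosure : Subsemiring (ℝ → ℝ) := posPoly.topologicalClosure

lemma posPoly_le : posPoly ≤ posClosure := posPoly.le_topologicalClosure

lemma isClosed_posClosure : IsClosed (posClosure : Set (ℝ → ℝ)) :=
  posPoly.isClosed_topologicalClosure

lemma const_mem_posClosure {c : ℝ} (hc : 0 ≤ c) : (fun _ => c) ∈ posClosure :=
  posPoly_le ⟨Polynomial.C c, fun i => by rw [Polynomial.coeff_C]; split_ifs <;> simp [hc],
    fun t => by simp⟩

lemma zvar_mem_posClosure : zvar ∈ posClosure :=
  posPoly_le ⟨Polynomial.X, fun i => by rw [Polynomial.coeff_X]; split_ifs <;> simp,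
    fun t => by simp⟩

lemma mul_sign_self (x : ℝ) : x * Real.sign x = |x| := by
  rcases lt_trichotomy x 0 with h | h | h
  · rw [Real.sign_of_neg h, abs_of_neg h]; ring
  · simp [h]
  · rw [Real.sign_of_pos h, abs_of_pos h]; ring

/-- The interpolation error of a function in `posClosure` has the sign of `cos 2πnt`: this holds
for polynomials, and both sides depend on finitely many values of the function only. -/
lemma abs_interpErr (n : ℕ) (t : ℝ) {F : ℝ → ℝ} (hF : F ∈ posClosure) :
    |interpErr n F t| = interpErr n F t * psi n t := by
  have hcl : IsClosed {F : ℝ → ℝ | |interpErr n F t| = interpErr n F t * psi n t} := by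
    have hc : Continuous fun F : ℝ → ℝ => interpErr n F t := by
      simp only [interpErr_eq]; fun_prop
    exact isClosed_eq hc.abs (hc.mul continuous_const)
  refine closure_minimal ?_ hcl hF
  rintro G ⟨p, hp, hG⟩
  obtain ⟨Q, R, hQ, hR, h⟩ := exists_quotient_nonneg
    ((Finset.range n).image (fun i => zvar (node n i)))
    (fun a ha => by
      obtain ⟨i, _, rfl⟩ := Finset.mem_image.mp ha
      exact zvar_nonneg _) hp
  rw [Finset.card_image_of_injOn (injOn_zvar_node n)] at hR
  have hR' := Lagrange.eq_interpolate_of_eval_eq (s := Finset.range n)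
    (v := fun i => zvar (node n i)) (r := fun i => G (node n i)) (injOn_zvar_node n) hR
    (fun i hi => by
      simp only [hG, h, Polynomial.eval_add, Polynomial.eval_mul, Polynomial.eval_prod]
      rw [Finset.prod_eq_zero (Finset.mem_image_of_mem _ hi) (by simp)]
      simp)
  have hE : interpErr n G t = cos (2 * π * n * t) * (Q.eval (zvar t) / 2 ^ (n - 1)) := by
    unfold interpErr
    rw [← hR', hG, h, prod_zvar]
    simp only [Polynomial.eval_add, Polynomial.eval_mul, Polynomial.eval_prod,
      Polynomial.eval_sub, Polynomial.eval_X, Polynomial.eval_C]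
    field_simp
    ring
  have hQ0 : 0 ≤ Q.eval (zvar t) / 2 ^ (n - 1) :=
    div_nonneg (eval_nonneg_of_coeff hQ (zvar_nonneg t)) (by positivity)
  change |interpErr n G t| = interpErr n G t * psi n t
  rw [hE, abs_mul, abs_of_nonneg hQ0, ← mul_sign_self]
  unfold psi
  ring

/-- The iterates converging to `1 - √(1-v)`; each is a polynomial in `v` with nonnegative
coefficients. -/
noncomputable def sqrtIter (v : ℝ) : ℕ → ℝ
  | 0 => 0
  | m + 1 => (v + sqrtIter v m ^ 2) / 2

lemma tendsto_sqrtIter {v : ℝ} (h0 : 0 ≤ v) (h1 : v ≤ 1) :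
    Filter.Tendsto (sqrtIter v) Filter.atTop (nhds (1 - √(1 - v))) := by
  have hb : ∀ m, 0 ≤ sqrtIter v m ∧ sqrtIter v m ≤ 1 ∧ sqrtIter v m ≤ sqrtIter v (m + 1) := by
    intro m
    induction m with
    | zero => simp [sqrtIter]; linarith
    | succ m ih =>
      obtain ⟨a, b, c⟩ := ih
      rw [sqrtIter] at c
      simp only [sqrtIter]
      set p := sqrtIter v m
      refine ⟨by positivity, by nlinarith, ?_⟩
      nlinarith
  have hm : Monotone (sqrtIter v) := monotone_nat_of_le_succ fun m => (hb m).2.2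
  have hbd : BddAbove (Set.range (sqrtIter v)) := ⟨1, by rintro _ ⟨m, rfl⟩; exact (hb m).2.1⟩
  have hL := tendsto_atTop_ciSup hm hbd
  set L := ⨆ i, sqrtIter v i
  have hL1 : L ≤ 1 := ciSup_le fun m => (hb m).2.1
  have hfix : L = (v + L ^ 2) / 2 := by
    refine tendsto_nhds_unique (hL.comp (Filter.tendsto_add_atTop_nat 1)) ?_
    exact ((hL.pow 2).const_add v).div_const 2
  have : √(1 - v) = 1 - L := by
    rw [show 1 - v = (1 - L) ^ 2 by linarith, Real.sqrt_sq (by linarith)]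
  rw [this]
  simpa using hL

/-- Iterated half-angle map: for `0 ≤ t ≤ 1` this is `1 - cos (π(2t-1)/2^k)`. -/
noncomputable def halfAngle : ℕ → ℝ → ℝ
  | 0 => zvar
  | k + 1 => fun t => 1 - √(1 - halfAngle k t / 2)

lemma halfAngle_mem_Icc (k : ℕ) (t : ℝ) : 0 ≤ halfAngle k t ∧ halfAngle k t ≤ 2 := by
  induction k with
  | zero => exact ⟨zvar_nonneg t, by simp only [halfAngle, zvar]; linarith [cos_le_one (2 * π * t)]⟩
  | succ k ih =>
    simp only [halfAngle]
    have h1 : √(1 - halfAngle k t / 2) ≤ 1 := Real.sqrt_le_one.mpr (by linarith)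
    have h2 := Real.sqrt_nonneg (1 - halfAngle k t / 2)
    constructor <;> linarith

lemma halfAngle_mem (k : ℕ) : halfAngle k ∈ posClosure := by
  induction k with
  | zero => exact zvar_mem_posClosure
  | succ k ih =>
    have hv : (fun t => halfAngle k t / 2) ∈ posClosure := by
      convert mul_mem ih (const_mem_posClosure (c := 1 / 2) (by norm_num)) using 1
      ext t; simp; ring
    have hm : ∀ m, (fun t => sqrtIter (halfAngle k t / 2) m) ∈ posClosure := by
      intro m
      induction m with
      | zero => exact zero_mem _
      | succ m ihm =>
        convert mul_mem (add_mem hv (pow_mem ihm 2))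
          (const_mem_posClosure (c := 1 / 2) (by norm_num)) using 1
        ext t; simp [sqrtIter]; ring
    refine isClosed_posClosure.mem_of_tendsto (b := Filter.atTop) (tendsto_pi_nhds.mpr fun t => ?_)
      (Filter.Eventually.of_forall hm)
    have := halfAngle_mem_Icc k t
    exact tendsto_sqrtIter (by linarith) (by linarith)

lemma halfAngle_eq (k : ℕ) {t : ℝ} (ht : t ∈ Set.Icc (0 : ℝ) 1) :
    halfAngle k t = 1 - cos (π * (2 * t - 1) / 2 ^ k) := by
  induction k with
  | zero =>
    simp only [halfAngle, zvar, pow_zero, div_one]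
    rw [show π * (2 * t - 1) = 2 * π * t - π by ring, cos_sub_pi]
    ring
  | succ k ih =>
    simp only [halfAngle]
    rw [ih]
    congr 1
    have hx : π * (2 * t - 1) / 2 ^ k = 2 * (π * (2 * t - 1) / 2 ^ (k + 1)) := by
      rw [pow_succ]; field_simp
    have hp : (2 : ℝ) ≤ 2 ^ (k + 1) := by
      rw [pow_succ]
      linarith [one_le_pow₀ (M₀ := ℝ) (a := 2) (by norm_num) (n := k)]
    have hc : 0 ≤ cos (π * (2 * t - 1) / 2 ^ (k + 1)) := by
      apply cos_nonneg_of_neg_pi_div_two_le_of_le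
      · rw [le_div_iff₀ (by positivity)]
        nlinarith [pi_pos, ht.1, mul_nonneg pi_pos.le ht.1]
      · rw [div_le_iff₀ (by positivity)]
        nlinarith [pi_pos, ht.2, mul_nonneg pi_pos.le (sub_nonneg.mpr ht.2)]
    rw [hx, cos_two_mul]
    conv_rhs => rw [← Real.sqrt_sq hc]
    congr 1
    ring

/-- The Bernoulli-type kernel `(t - 1/2)² / 2` on `[0,1]`. -/
noncomputable def bker (t : ℝ) : ℝ := (t - 1 / 2) ^ 2 / 2

lemma tendsto_halfAngle {t : ℝ} (ht : t ∈ Set.Icc (0 : ℝ) 1) :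
    Filter.Tendsto (fun k => 4 ^ k / (4 * π ^ 2) * halfAngle k t) Filter.atTop
      (nhds (bker t)) := by
  have h1 : ∀ k : ℕ, 4 ^ k / (4 * π ^ 2) * halfAngle k t =
      bker t * Real.sinc (π * (t - 1 / 2) * (1 / 2) ^ k) ^ 2 := by
    intro k
    rw [halfAngle_eq k ht]
    set y := π * (t - 1 / 2) * (1 / 2) ^ k with hy
    have e1 : π * (2 * t - 1) / 2 ^ k = 2 * y := by
      rw [hy, one_div_pow]; field_simp
    have e2 : sin y = y * Real.sinc y := by
      rcases eq_or_ne y 0 with h | h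
      · simp [h]
      · rw [Real.sinc_of_ne_zero h]; field_simp
    have e3 : 1 - cos (2 * y) = 2 * (y * Real.sinc y) ^ 2 := by
      rw [← e2, cos_two_mul, cos_sq']; ring
    rw [e1, e3, bker]
    have e4 : y ^ 2 * 4 ^ k = (π * (t - 1 / 2)) ^ 2 := by
      rw [hy, mul_pow, mul_assoc, ← pow_mul, mul_comm k 2, pow_mul, ← mul_pow]; norm_num
    have : 4 ^ k / (4 * π ^ 2) * (2 * (y * Real.sinc y) ^ 2) =
      (y ^ 2 * 4 ^ k) * Real.sinc y ^ 2 / (2 * π ^ 2) := by field_simp; ring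
    rw [this, e4]
    field_simp
  simp only [h1]
  have h2 : Filter.Tendsto (fun k : ℕ => π * (t - 1 / 2) * (1 / 2 : ℝ) ^ k) Filter.atTop
      (nhds 0) := by
    simpa using (tendsto_pow_atTop_nhds_zero_of_lt_one (r := (1 / 2 : ℝ)) (by norm_num)
      (by norm_num)).const_mul (π * (t - 1 / 2))
  have h3 := ((Real.continuous_sinc.tendsto 0).comp h2).pow 2
  simpa using h3.const_mul (bker t)

/-- The interpolation error of the kernel `bker` has the sign of `cos 2πnt` on `[0,1]`. -/
lemma abs_interpErr_bker (n : ℕ) {t : ℝ} (ht : t ∈ Set.Icc (0 : ℝ) 1) :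
    |interpErr n bker t| = interpErr n bker t * psi n t := by
  have hlim : Filter.Tendsto
      (fun k => interpErr n (fun t => 4 ^ k / (4 * π ^ 2) * halfAngle k t) t) Filter.atTop
      (nhds (interpErr n bker t)) := by
    simp only [interpErr_eq]
    refine (tendsto_halfAngle ht).sub (tendsto_finsetSum _ fun i hi => ?_)
    exact (tendsto_halfAngle (node_mem (Finset.mem_range.mp hi))).mul_const _
  refine tendsto_nhds_unique hlim.abs ((hlim.mul_const (psi n t)).congr fun k => ?_)
  refine (abs_interpErr n t ?_).symm
  exact mul_mem (const_mem_posClosure (c := 4 ^ k / (4 * π ^ 2)) (by positivity))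
    (halfAngle_mem k)

/-! ### Trigonometric polynomials -/

lemma IsTrigPolyDegLT.zero (n : ℕ) : IsTrigPolyDegLT n fun _ => 0 :=
  ⟨0, 0, fun t => by simp⟩

lemma IsTrigPolyDegLT.add {n : ℕ} {F G : ℝ → ℝ} (hF : IsTrigPolyDegLT n F)
    (hG : IsTrigPolyDegLT n G) : IsTrigPolyDegLT n fun t => F t + G t := by
  obtain ⟨a, b, h⟩ := hF
  obtain ⟨c, d, h'⟩ := hG
  refine ⟨a + c, b + d, fun t => ?_⟩
  change F t + G t = _
  rw [h, h', ← Finset.sum_add_distrib]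
  exact Finset.sum_congr rfl fun j _ => by simp only [Pi.add_apply]; ring

lemma IsTrigPolyDegLT.const_mul {n : ℕ} {F : ℝ → ℝ} (c : ℝ) (hF : IsTrigPolyDegLT n F) :
    IsTrigPolyDegLT n fun t => c * F t := by
  obtain ⟨a, b, h⟩ := hF
  refine ⟨fun j => c * a j, fun j => c * b j, fun t => ?_⟩
  change c * F t = _
  rw [h, Finset.mul_sum]
  exact Finset.sum_congr rfl fun j _ => by ring

lemma IsTrigPolyDegLT.sum {n : ℕ} {ι : Type*} (s : Finset ι) {F : ι → ℝ → ℝ}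
    (hF : ∀ i ∈ s, IsTrigPolyDegLT n (F i)) : IsTrigPolyDegLT n fun t => ∑ i ∈ s, F i t := by
  classical
  induction s using Finset.induction_on with
  | empty => simpa using IsTrigPolyDegLT.zero n
  | insert i s hi ih =>
    simp only [Finset.sum_insert hi]
    exact (hF i (Finset.mem_insert_self _ _)).add
      (ih fun j hj => hF j (Finset.mem_insert_of_mem hj))

lemma isTrigPolyDegLT_cos {n j : ℕ} (hj : j < n) :
    IsTrigPolyDegLT n fun t => cos (2 * π * j * t) :=
  ⟨fun i => if i = j then 1 else 0, 0, fun t => by simp [hj]⟩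

lemma isTrigPolyDegLT_sin {n j : ℕ} (hj : j < n) :
    IsTrigPolyDegLT n fun t => sin (2 * π * j * t) :=
  ⟨0, fun i => if i = j then 1 else 0, fun t => by simp [hj]⟩

lemma isTrigPolyDegLT_const {n : ℕ} (hn : 1 ≤ n) (c : ℝ) : IsTrigPolyDegLT n fun _ => c := by
  simpa using (isTrigPolyDegLT_cos (n := n) (j := 0) hn).const_mul c

lemma IsTrigPolyDegLT.mono {m n : ℕ} (h : m ≤ n) {F : ℝ → ℝ} (hF : IsTrigPolyDegLT m F) :
    IsTrigPolyDegLT n F := by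
  obtain ⟨a, b, h'⟩ := hF
  have e : F = fun t => ∑ j ∈ Finset.range m,
      (a j * cos (2 * π * j * t) + b j * sin (2 * π * j * t)) := funext h'
  rw [e]
  refine IsTrigPolyDegLT.sum _ fun j hj => ?_
  have hj' : j < n := (Finset.mem_range.mp hj).trans_le h
  exact ((isTrigPolyDegLT_cos hj').const_mul _).add ((isTrigPolyDegLT_sin hj').const_mul _)

lemma isTrigPolyDegLT_cos_mul {n j : ℕ} (hj : j < n) :
    IsTrigPolyDegLT (n + 1) fun t => cos (2 * π * j * t) * cos (2 * π * t) := by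
  rcases j with _ | j
  · simpa using isTrigPolyDegLT_cos (n := n + 1) (j := 1) (by omega)
  · convert ((isTrigPolyDegLT_cos (n := n + 1) (j := j + 2) (by omega)).const_mul (1 / 2)).add
      ((isTrigPolyDegLT_cos (n := n + 1) (j := j) (by omega)).const_mul (1 / 2)) using 2 with t
    have e1 : 2 * π * ((j + 2 : ℕ) : ℝ) * t = 2 * π * ((j + 1 : ℕ) : ℝ) * t + 2 * π * t := by
      push_cast; ring
    have e2 : 2 * π * (j : ℝ) * t = 2 * π * ((j + 1 : ℕ) : ℝ) * t - 2 * π * t := by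
      push_cast; ring
    rw [e1, e2, cos_add, cos_sub]
    ring

lemma isTrigPolyDegLT_sin_mul {n j : ℕ} (hj : j < n) :
    IsTrigPolyDegLT (n + 1) fun t => sin (2 * π * j * t) * cos (2 * π * t) := by
  rcases j with _ | j
  · simpa using IsTrigPolyDegLT.zero (n + 1)
  · convert ((isTrigPolyDegLT_sin (n := n + 1) (j := j + 2) (by omega)).const_mul (1 / 2)).add
      ((isTrigPolyDegLT_sin (n := n + 1) (j := j) (by omega)).const_mul (1 / 2)) using 2 with t
    have e1 : 2 * π * ((j + 2 : ℕ) : ℝ) * t = 2 * π * ((j + 1 : ℕ) : ℝ) * t + 2 * π * t := by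
      push_cast; ring
    have e2 : 2 * π * (j : ℝ) * t = 2 * π * ((j + 1 : ℕ) : ℝ) * t - 2 * π * t := by
      push_cast; ring
    rw [e1, e2, sin_add, sin_sub]
    ring

lemma IsTrigPolyDegLT.mul_cos {n : ℕ} {F : ℝ → ℝ} (hF : IsTrigPolyDegLT n F) :
    IsTrigPolyDegLT (n + 1) fun t => F t * cos (2 * π * t) := by
  obtain ⟨a, b, h⟩ := hF
  simp only [h, Finset.sum_mul]
  refine IsTrigPolyDegLT.sum _ fun j hj => ?_
  have hj' := Finset.mem_range.mp hj
  convert ((isTrigPolyDegLT_cos_mul hj').const_mul (a j)).add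
    ((isTrigPolyDegLT_sin_mul hj').const_mul (b j)) using 2 with t
  ring

lemma isTrigPolyDegLT_zvar_pow (k : ℕ) : IsTrigPolyDegLT (k + 1) fun t => zvar t ^ k := by
  induction k with
  | zero => simpa using isTrigPolyDegLT_const le_rfl 1
  | succ k ih =>
    convert (ih.mono (Nat.le_succ _)).add ih.mul_cos using 2 with t
    rw [pow_succ, zvar]
    ring

lemma isTrigPolyDegLT_eval_zvar {n : ℕ} {p : Polynomial ℝ} (hp : p.degree < n) :
    IsTrigPolyDegLT n fun t => p.eval (zvar t) := by
  rcases eq_or_ne p 0 with rfl | h0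
  · simpa using IsTrigPolyDegLT.zero n
  have hd : p.natDegree < n := (Polynomial.natDegree_lt_iff_degree_lt h0).mpr hp
  simp only [Polynomial.eval_eq_sum_range]
  refine IsTrigPolyDegLT.sum _ fun i hi => ?_
  refine ((isTrigPolyDegLT_zvar_pow i).mono ?_).const_mul _
  have := Finset.mem_range.mp hi
  omega

lemma IsTrigPolyDegLT.continuous {n : ℕ} {F : ℝ → ℝ} (hF : IsTrigPolyDegLT n F) :
    Continuous F := by
  obtain ⟨a, b, h⟩ := hF
  rw [funext h]
  fun_prop

lemma IsTrigPolyDegLT.periodic {n : ℕ} {F : ℝ → ℝ} (hF : IsTrigPolyDegLT n F) :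
    Function.Periodic F 1 := by
  obtain ⟨a, b, h⟩ := hF
  intro t
  rw [h, h]
  refine Finset.sum_congr rfl fun j _ => ?_
  have e : 2 * π * (j : ℝ) * (t + 1) = 2 * π * j * t + j * (2 * π) := by ring
  rw [e, cos_add_nat_mul_two_pi, sin_add_nat_mul_two_pi]

/-- Convolving a trigonometric polynomial over a period preserves its degree. -/
lemma IsTrigPolyDegLT.convolution {n : ℕ} {T k : ℝ → ℝ} (hT : IsTrigPolyDegLT n T)
    (hk : Continuous k) (hper : Function.Periodic k 1) :
    IsTrigPolyDegLT n fun x => ∫ t in (0 : ℝ)..1, T t * k (x - t) := by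
  have hswap : ∀ x, ∫ t in (0 : ℝ)..1, T t * k (x - t) = ∫ t in (0 : ℝ)..1, T (x - t) * k t := by
    intro x
    have h1 := intervalIntegral.integral_comp_sub_left (a := 0) (b := 1)
      (fun t => T (x - t) * k t) x
    simp only [sub_sub_cancel] at h1
    rw [h1]
    have hp : Function.Periodic (fun t => T (x - t) * k t) 1 := by
      intro t
      have := hT.periodic (x - (t + 1))
      simp only [hper t]
      rw [← this]
      congr 2
      ring
    have := hp.intervalIntegral_add_eq (x - 1) 0
    simpa using this
  simp only [hswap]
  obtain ⟨a, b, h⟩ := hT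
  refine ⟨fun j => a j * (∫ t in (0 : ℝ)..1, cos (2 * π * j * t) * k t) -
      b j * (∫ t in (0 : ℝ)..1, sin (2 * π * j * t) * k t),
    fun j => a j * (∫ t in (0 : ℝ)..1, sin (2 * π * j * t) * k t) +
      b j * (∫ t in (0 : ℝ)..1, cos (2 * π * j * t) * k t), fun x => ?_⟩
  simp only [h, Finset.sum_mul]
  rw [intervalIntegral.integral_finsetSum fun j _ =>
    Continuous.intervalIntegrable (by fun_prop) _ _]
  refine Finset.sum_congr rfl fun j _ => ?_
  have e : ∀ t, (a j * cos (2 * π * j * (x - t)) + b j * sin (2 * π * j * (x - t))) * k t =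
      (a j * cos (2 * π * j * x) + b j * sin (2 * π * j * x)) * (cos (2 * π * j * t) * k t) +
      (a j * sin (2 * π * j * x) - b j * cos (2 * π * j * x)) * (sin (2 * π * j * t) * k t) := by
    intro t
    rw [mul_sub, cos_sub, sin_sub]
    ring
  simp only [e]
  rw [intervalIntegral.integral_add (Continuous.intervalIntegrable (by fun_prop) _ _)
    (Continuous.intervalIntegrable (by fun_prop) _ _), intervalIntegral.integral_const_mul,
    intervalIntegral.integral_const_mul]
  ring

/-! ### Best `L¹` approximation of the kernel -/

/-- The even trigonometric polynomial of degree `< n` agreeing with `bker` at the zeros of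
`cos 2πnt`. -/
noncomputable def tker (n : ℕ) (t : ℝ) : ℝ :=
  (Lagrange.interpolate (Finset.range n) (fun i => zvar (node n i))
    (fun i => bker (node n i))).eval (zvar t)

lemma isTrigPolyDegLT_tker (n : ℕ) : IsTrigPolyDegLT n (tker n) :=
  isTrigPolyDegLT_eval_zvar (by
    simpa using Lagrange.degree_interpolate_lt (fun i => bker (node n i)) (injOn_zvar_node n))

lemma abs_bker_sub_tker (n : ℕ) {t : ℝ} (ht : t ∈ Set.Icc (0 : ℝ) 1) :
    |bker t - tker n t| = (bker t - tker n t) * psi n t :=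
  abs_interpErr_bker n ht

lemma measurable_psi (n : ℕ) : Measurable (psi n) := by
  unfold psi Real.sign
  refine Measurable.ite (measurableSet_lt (by fun_prop) (by fun_prop)) (by fun_prop)
    (Measurable.ite (measurableSet_lt (by fun_prop) (by fun_prop)) (by fun_prop) (by fun_prop))

lemma abs_psi_le (n : ℕ) (t : ℝ) : |psi n t| ≤ 1 := by
  rcases Real.sign_apply_eq (cos (2 * π * n * t)) with h | h | h <;> simp [psi, h]

lemma intervalIntegrable_mul_psi (n : ℕ) {F : ℝ → ℝ} (hF : Continuous F) (a b : ℝ) :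
    IntervalIntegrable (fun t => F t * psi n t) volume a b := by
  refine (hF.intervalIntegrable a b).mono_fun
    (hF.aestronglyMeasurable.mul (measurable_psi n).aestronglyMeasurable)
    (Filter.Eventually.of_forall fun t => ?_)
  simp only [norm_mul, Real.norm_eq_abs]
  exact mul_le_of_le_one_right (abs_nonneg _) (abs_psi_le n t)

lemma psi_antiperiodic {n : ℕ} (hn : 1 ≤ n) (t : ℝ) : psi n (t + 1 / (2 * n)) = -psi n t := by
  have h0 : (n : ℝ) ≠ 0 := by positivity
  unfold psi
  rw [show 2 * π * n * (t + 1 / (2 * n)) = 2 * π * n * t + π by field_simp, cos_add_pi,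
    Real.sign_neg]

lemma psi_periodic (n : ℕ) : Function.Periodic (psi n) 1 := by
  intro t
  unfold psi
  rw [show 2 * π * n * (t + 1) = 2 * π * n * t + n * (2 * π) by ring, cos_add_nat_mul_two_pi]

/-- Shifting by half a period of `cos 2πnt` turns the pair of moments of `psi` against
`cos 2πjt`, `sin 2πjt` into minus its rotation by `πj/n`, so both vanish for `j < n`. -/
lemma moments_psi {n j : ℕ} (hn : 1 ≤ n) (hj : j < n) :
    (∫ t in (0 : ℝ)..1, cos (2 * π * j * t) * psi n t) = 0 ∧
    (∫ t in (0 : ℝ)..1, sin (2 * π * j * t) * psi n t) = 0 := by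
  have hshift : ∀ F : ℝ → ℝ, Continuous F → Function.Periodic F 1 →
      (∫ t in (0 : ℝ)..1, F t * psi n t) =
        -∫ t in (0 : ℝ)..1, F (t + 1 / (2 * n)) * psi n t := by
    intro F _ hF
    have h1 := intervalIntegral.integral_comp_add_right (a := 0) (b := 1)
      (fun t => F t * psi n t) (1 / (2 * n))
    have h2 := (hF.mul (psi_periodic n)).intervalIntegral_add_eq 0 (1 / (2 * n))
    simp only [psi_antiperiodic hn, mul_neg, intervalIntegral.integral_neg] at h1
    rw [h1, zero_add, add_comm 1 _]
    simpa using h2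
  set a : ℝ := π * j / n with ha
  have h0 : (0 : ℝ) < n := by positivity
  have harg : ∀ t, 2 * π * j * (t + 1 / (2 * n)) = 2 * π * j * t + a := by
    intro t; rw [ha]; field_simp
  set C := ∫ t in (0 : ℝ)..1, cos (2 * π * j * t) * psi n t with hC
  set S := ∫ t in (0 : ℝ)..1, sin (2 * π * j * t) * psi n t with hS
  have ic := intervalIntegrable_mul_psi n (F := fun t => cos (2 * π * j * t)) (by fun_prop) 0 1
  have is := intervalIntegrable_mul_psi n (F := fun t => sin (2 * π * j * t)) (by fun_prop) 0 1
  have e1 : C = -(cos a * C - sin a * S) := by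
    conv_lhs => rw [hC, hshift (fun t => cos (2 * π * j * t)) (by fun_prop)
      (isTrigPolyDegLT_cos hj).periodic]
    rw [hC, hS, ← intervalIntegral.integral_const_mul, ← intervalIntegral.integral_const_mul,
      ← intervalIntegral.integral_sub (ic.const_mul _) (is.const_mul _)]
    congr 2
    ext t
    rw [harg, cos_add]
    ring
  have e2 : S = -(sin a * C + cos a * S) := by
    conv_lhs => rw [hS, hshift (fun t => sin (2 * π * j * t)) (by fun_prop)
      (isTrigPolyDegLT_sin hj).periodic]
    rw [hC, hS, ← intervalIntegral.integral_const_mul, ← intervalIntegral.integral_const_mul,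
      ← intervalIntegral.integral_add (ic.const_mul _) (is.const_mul _)]
    congr 2
    ext t
    rw [harg, sin_add]
    ring
  have hpos : 0 < 1 + cos a := by
    have h1 : a < π := by
      rw [ha, div_lt_iff₀ h0]
      exact mul_lt_mul_of_pos_left (by exact_mod_cast hj) pi_pos
    have h2 : 0 ≤ a := by positivity
    have := cos_lt_cos_of_nonneg_of_le_pi h2 le_rfl h1
    rw [cos_pi] at this
    linarith
  have hne : (1 + cos a) ^ 2 + sin a ^ 2 ≠ 0 := by positivity
  constructor
  · apply (mul_eq_zero.mp (?_ : ((1 + cos a) ^ 2 + sin a ^ 2) * C = 0)).resolve_left hne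
    linear_combination (1 + cos a) * e1 + sin a * e2
  · apply (mul_eq_zero.mp (?_ : ((1 + cos a) ^ 2 + sin a ^ 2) * S = 0)).resolve_left hne
    linear_combination (1 + cos a) * e2 - sin a * e1

lemma IsTrigPolyDegLT.integral_mul_psi {n : ℕ} (hn : 1 ≤ n) {T : ℝ → ℝ}
    (hT : IsTrigPolyDegLT n T) : ∫ t in (0 : ℝ)..1, T t * psi n t = 0 := by
  obtain ⟨a, b, h⟩ := hT
  simp only [h, Finset.sum_mul]
  rw [intervalIntegral.integral_finsetSum fun j _ =>
    intervalIntegrable_mul_psi n (by fun_prop) _ _]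
  refine Finset.sum_eq_zero fun j hj => ?_
  have ic := intervalIntegrable_mul_psi n (F := fun t => cos (2 * π * j * t)) (by fun_prop) 0 1
  have is := intervalIntegrable_mul_psi n (F := fun t => sin (2 * π * j * t)) (by fun_prop) 0 1
  obtain ⟨h1, h2⟩ := moments_psi hn (Finset.mem_range.mp hj)
  simp only [add_mul, mul_assoc (a j), mul_assoc (b j)]
  rw [intervalIntegral.integral_add (ic.const_mul _) (is.const_mul _),
    intervalIntegral.integral_const_mul, intervalIntegral.integral_const_mul, h1, h2]
  simp

lemma psi_of_mem_left {n : ℕ} (hn : 1 ≤ n) {s : ℝ} (hs : s ∈ Set.Ioo 0 (1 / (4 * n : ℝ))) :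
    psi n s = 1 := by
  have h0 : (0 : ℝ) < n := by positivity
  refine Real.sign_of_pos (cos_pos_of_mem_Ioo ⟨?_, ?_⟩)
  · have : 0 ≤ 2 * π * n * s := by have := hs.1; positivity
    linarith [pi_pos]
  · have := hs.2
    rw [lt_div_iff₀ (by positivity)] at this
    nlinarith [pi_pos]

lemma psi_of_mem_right {n : ℕ} (hn : 1 ≤ n) {s : ℝ} (hs : s ∈ Set.Ioo 0 (1 / (4 * n : ℝ))) :
    psi n (s + 1 / (4 * n)) = -1 := by
  have h0 : (0 : ℝ) < n := by positivity
  have e : 2 * π * n * (s + 1 / (4 * n)) = 2 * π * n * s + π / 2 := by field_simp; ring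
  unfold psi
  rw [e, cos_add_pi_div_two]
  refine Real.sign_of_neg (neg_neg_of_pos (sin_pos_of_mem_Ioo ⟨?_, ?_⟩))
  · have := hs.1; positivity
  · have := hs.2
    rw [lt_div_iff₀ (by positivity)] at this
    nlinarith [pi_pos]

lemma psi_add_nat {n : ℕ} (hn : 1 ≤ n) (k : ℕ) (s : ℝ) :
    psi n (s + k * (1 / (2 * n))) = (-1) ^ k * psi n s := by
  induction k with
  | zero => simp
  | succ k ih =>
    rw [pow_succ, show s + ((k + 1 : ℕ) : ℝ) * (1 / (2 * n)) =
      (s + k * (1 / (2 * n))) + 1 / (2 * n) by push_cast; ring, psi_antiperiodic hn, ih]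
    ring

lemma sum_alternating (n : ℕ) : ∑ k ∈ Finset.range (2 * n), (-1 : ℝ) ^ k * k = -n := by
  induction n with
  | zero => simp
  | succ n ih =>
    rw [show 2 * (n + 1) = 2 * n + 1 + 1 by ring, Finset.sum_range_succ, Finset.sum_range_succ, ih]
    rw [pow_succ, pow_mul]
    push_cast
    ring_nf

/-- One half-period of `cos 2πnt`: the quadratic `bker` against the sign. -/
lemma integral_bker_piece {n : ℕ} (hn : 1 ≤ n) (k : ℕ) :
    ∫ t in (k * (1 / (2 * n : ℝ)))..((k + 1 : ℕ) * (1 / (2 * n : ℝ))), bker t * psi n t =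
      (-1) ^ k * (-(1 / (4 * n)) ^ 2 * (k * (1 / (2 * n)) - 1 / 2 + 1 / (4 * n))) := by
  have h0 : (0 : ℝ) < n := by positivity
  set q : ℝ := 1 / (4 * n) with hq
  have hq0 : 0 < q := by positivity
  have h2q : (1 / (2 * n) : ℝ) = 2 * q := by rw [hq]; field_simp; norm_num
  have hb : Continuous bker := by unfold bker; fun_prop
  have hbi : ∀ c a b : ℝ, IntervalIntegrable (fun s => bker (s + c)) volume a b := fun c a b =>
    (hb.comp (continuous_add_const c)).intervalIntegrable a b
  rw [h2q]
  set c : ℝ := k * (2 * q) with hc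
  have e1 : ((k + 1 : ℕ) : ℝ) * (2 * q) = 2 * q + c := by rw [hc]; push_cast; ring
  have h1 := intervalIntegral.integral_comp_add_right (a := 0) (b := 2 * q)
    (fun t => bker t * psi n t) c
  rw [e1]
  rw [zero_add] at h1
  rw [← h1]
  have hpsi : ∀ s, psi n (s + c) = (-1) ^ k * psi n s := by
    intro s; rw [hc, ← h2q]; exact psi_add_nat hn k s
  simp only [hpsi]
  have hint : ∀ a b, IntervalIntegrable
      (fun s => bker (s + c) * ((-1) ^ k * psi n s)) volume a b := by
    intro a b
    have := intervalIntegrable_mul_psi n (F := fun s => bker (s + c) * (-1) ^ k)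
      (by unfold bker; fun_prop) a b
    simpa only [mul_assoc] using this
  rw [← intervalIntegral.integral_add_adjacent_intervals (hint 0 q) (hint q (2 * q))]
  have h3 : ∫ s in q..(2 * q), bker (s + c) * ((-1) ^ k * psi n s) =
      ∫ s in (0 : ℝ)..q, bker (s + q + c) * ((-1) ^ k * psi n (s + q)) := by
    have := intervalIntegral.integral_comp_add_right (a := 0) (b := q)
      (fun s => bker (s + c) * ((-1) ^ k * psi n s)) q
    rw [this]
    congr 1 <;> ring
  have h4 : ∫ s in (0 : ℝ)..q, bker (s + c) * ((-1) ^ k * psi n s) =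
      ∫ s in (0 : ℝ)..q, (-1) ^ k * bker (s + c) := by
    refine intervalIntegral.integral_congr_Ioo_of_le hq0.le fun s hs => ?_
    simp only [psi_of_mem_left hn hs]; ring
  have h5 : ∫ s in (0 : ℝ)..q, bker (s + q + c) * ((-1) ^ k * psi n (s + q)) =
      ∫ s in (0 : ℝ)..q, -((-1) ^ k * bker (s + q + c)) := by
    refine intervalIntegral.integral_congr_Ioo_of_le hq0.le fun s hs => ?_
    have := psi_of_mem_right hn hs
    rw [← hq] at this
    simp only [this]; ring
  rw [h3, h4, h5, ← intervalIntegral.integral_add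
    (Continuous.intervalIntegrable (by unfold bker; fun_prop) _ _)
    (Continuous.intervalIntegrable (by unfold bker; fun_prop) _ _)]
  have e2 : ∀ s, (-1 : ℝ) ^ k * bker (s + c) + -((-1) ^ k * bker (s + q + c)) =
      (-1) ^ k * (-q * (s + (c - 1 / 2 + q / 2))) := by
    intro s; unfold bker; ring
  simp only [e2]
  rw [intervalIntegral.integral_const_mul, intervalIntegral.integral_const_mul,
    intervalIntegral.integral_add (Continuous.intervalIntegrable (by fun_prop) _ _)
    (Continuous.intervalIntegrable (by fun_prop) _ _), integral_id,
    intervalIntegral.integral_const, smul_eq_mul]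
  ring

lemma integral_bker_mul_psi {n : ℕ} (hn : 1 ≤ n) :
    ∫ t in (0 : ℝ)..1, bker t * psi n t = 1 / (32 * n ^ 2) := by
  have h0 : (0 : ℝ) < n := by positivity
  have h1 := intervalIntegral.sum_integral_adjacent_intervals (μ := volume)
    (f := fun t => bker t * psi n t) (a := fun k : ℕ => k * (1 / (2 * n : ℝ))) (n := 2 * n)
    (fun k _ => intervalIntegrable_mul_psi n (by unfold bker; fun_prop) _ _)
  simp only [integral_bker_piece hn] at h1
  have e : (((2 * n : ℕ) : ℝ)) * (1 / (2 * n)) = 1 := by push_cast; field_simp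
  rw [e, Nat.cast_zero, zero_mul] at h1
  rw [← h1]
  set q : ℝ := 1 / (4 * n) with hq
  have h2q : (1 / (2 * n) : ℝ) = 2 * q := by rw [hq]; field_simp; norm_num
  have halt : ∑ k ∈ Finset.range (2 * n), (-1 : ℝ) ^ k = 0 := by
    rw [neg_one_geom_sum]; simp
  have e2 : ∀ k : ℕ, (-1 : ℝ) ^ k * (-q ^ 2 * (k * (1 / (2 * n)) - 1 / 2 + q)) =
      -(2 * q ^ 3) * ((-1) ^ k * k) + (-q ^ 2 * (q - 1 / 2)) * (-1) ^ k := by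
    intro k; rw [h2q]; ring
  simp only [e2]
  rw [Finset.sum_add_distrib, ← Finset.mul_sum, ← Finset.mul_sum, halt, sum_alternating, hq]
  field_simp
  ring

/-- The `L¹` distance from `bker` to trigonometric polynomials of degree `< n`. -/
lemma integral_abs_bker_sub_tker {n : ℕ} (hn : 1 ≤ n) :
    ∫ t in (0 : ℝ)..1, |bker t - tker n t| = 1 / (32 * n ^ 2) := by
  have h1 : ∫ t in (0 : ℝ)..1, |bker t - tker n t| =
      ∫ t in (0 : ℝ)..1, (bker t * psi n t - tker n t * psi n t) := by
    refine intervalIntegral.integral_congr fun t ht => ?_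
    rw [Set.uIcc_of_le zero_le_one] at ht
    simp only [abs_bker_sub_tker n ht]
    ring
  rw [h1, intervalIntegral.integral_sub
    (intervalIntegrable_mul_psi n (by unfold bker; fun_prop) _ _)
    (intervalIntegrable_mul_psi n (isTrigPolyDegLT_tker n).continuous _ _),
    integral_bker_mul_psi hn, (isTrigPolyDegLT_tker n).integral_mul_psi hn, sub_zero]

/-! ### Favard's inequality -/

/-- Favard's inequality for second derivatives, with the sharp constant. -/
lemma favard {n : ℕ} (hn : 1 ≤ n) {g g1 k : ℝ → ℝ} (hg : ∀ x, HasDerivAt g (g1 x) x)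
    (hg1 : ∀ x, HasDerivAt g1 (k x) x) (hk : Continuous k) (hper : Function.Periodic g 1)
    (hkper : Function.Periodic k 1) {M : ℝ} (hM : ∀ x, |k x| ≤ M) :
    ∃ τ, IsTrigPolyDegLT n τ ∧ ∀ x, |g x - τ x| ≤ M / (32 * n ^ 2) := by
  have hgc : Continuous g := continuous_iff_continuousAt.mpr fun x => (hg x).continuousAt
  have hT := isTrigPolyDegLT_tker n
  have hTc := hT.continuous
  have hbc : Continuous bker := by unfold bker; fun_prop
  refine ⟨fun x => (∫ t in (0 : ℝ)..1, g t) + -1 * ∫ t in (0 : ℝ)..1, tker n t * k (x - t),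
    (isTrigPolyDegLT_const hn _).add ((hT.convolution hk hkper).const_mul _), fun x => ?_⟩
  have hg1per : g1 (x - 1) = g1 x := by
    have h1 : HasDerivAt (fun y => g (y - 1)) (g1 (x - 1)) x := by
      simpa using (hg (x - 1)).comp_sub_const x 1
    have h2 : (fun y => g (y - 1)) = g := funext fun y => hper.sub_eq y
    rw [h2] at h1
    exact h1.unique (hg x)
  -- two integrations by parts against the kernel, in antiderivative form
  have hrep : ∫ t in (0 : ℝ)..1, bker t * k (x - t) = (∫ t in (0 : ℝ)..1, g t) - g x := by
    have hd : ∀ t ∈ Set.uIcc (0 : ℝ) 1,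
        HasDerivAt (fun t => -(bker t * g1 (x - t)) - (t - 1 / 2) * g (x - t))
          (bker t * k (x - t) - g (x - t)) t := by
      intro t _
      have hs : HasDerivAt (fun t => x - t) (-1) t := by
        simpa using (hasDerivAt_id t).const_sub x
      have a1 : HasDerivAt (fun t => g1 (x - t)) (-k (x - t)) t := by
        simpa [Function.comp_def] using (hg1 (x - t)).comp t hs
      have a2 : HasDerivAt (fun t => g (x - t)) (-g1 (x - t)) t := by
        simpa [Function.comp_def] using (hg (x - t)).comp t hs
      have a3 : HasDerivAt (fun t : ℝ => t - 1 / 2) 1 t := by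
        simpa using (hasDerivAt_id t).sub_const (1 / 2)
      have a4 : HasDerivAt bker (t - 1 / 2) t := by
        exact ((a3.pow 2).div_const 2).congr_deriv (by simp)
      exact ((a4.mul a1).neg.sub (a3.mul a2)).congr_deriv (by ring)
    have hft := intervalIntegral.integral_eq_sub_of_hasDerivAt hd
      (Continuous.intervalIntegrable (by fun_prop) _ _)
    rw [intervalIntegral.integral_sub (Continuous.intervalIntegrable (by fun_prop) _ _)
      (Continuous.intervalIntegrable (by fun_prop) _ _)] at hft
    have hmean : ∫ t in (0 : ℝ)..1, g (x - t) = ∫ t in (0 : ℝ)..1, g t := by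
      rw [intervalIntegral.integral_comp_sub_left (fun t => g t) x]
      simpa using hper.intervalIntegral_add_eq (x - 1) 0
    rw [hmean, hg1per, hper.sub_eq] at hft
    simp only [bker, sub_zero] at hft ⊢
    linarith
  have hdiff : g x - ((∫ t in (0 : ℝ)..1, g t) + -1 * ∫ t in (0 : ℝ)..1, tker n t * k (x - t)) =
      -∫ t in (0 : ℝ)..1, (bker t - tker n t) * k (x - t) := by
    simp only [sub_mul]
    rw [intervalIntegral.integral_sub (Continuous.intervalIntegrable (by fun_prop) _ _)
      (Continuous.intervalIntegrable (by fun_prop) _ _), hrep]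
    ring
  rw [hdiff, abs_neg]
  calc |∫ t in (0 : ℝ)..1, (bker t - tker n t) * k (x - t)|
      ≤ ∫ t in (0 : ℝ)..1, |(bker t - tker n t) * k (x - t)| :=
        intervalIntegral.abs_integral_le_integral_abs zero_le_one
    _ ≤ ∫ t in (0 : ℝ)..1, |bker t - tker n t| * M := by
        refine intervalIntegral.integral_mono_on zero_le_one
          (Continuous.intervalIntegrable (by fun_prop) _ _)
          (Continuous.intervalIntegrable (by fun_prop) _ _) fun t _ => ?_
        rw [abs_mul]
        exact mul_le_mul_of_nonneg_left (hM _) (abs_nonneg _)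
    _ = M / (32 * n ^ 2) := by
        rw [intervalIntegral.integral_mul_const, integral_abs_bker_sub_tker hn]
        ring

/-! ### Triangle averages and second differences -/

/-- The square `χ_u * χ_u` is the triangle function. -/
lemma chiPow_two {u : ℝ} (hu : 0 < u) (t : ℝ) : chiPow u 2 t = max 0 (u - |t|) / u ^ 2 := by
  have h1 : (fun v => chi u v * chi u (t - v)) =
      (Set.Ioo (max (-u / 2) (t - u / 2)) (min (u / 2) (t + u / 2))).indicator
        fun _ => 1 / u ^ 2 := by
    ext v
    unfold chi
    by_cases hv : v ∈ Set.Ioo (max (-u / 2) (t - u / 2)) (min (u / 2) (t + u / 2))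
    · rw [Set.indicator_of_mem hv]
      obtain ⟨h1, h2⟩ := hv
      rw [max_lt_iff] at h1
      rw [lt_min_iff] at h2
      rw [if_pos ⟨h1.1, h2.1⟩, if_pos ⟨by linarith [h2.2], by linarith [h1.2]⟩]
      field_simp
    · rw [Set.indicator_of_notMem hv]
      by_contra hne
      have ha := left_ne_zero_of_mul hne
      have hb := right_ne_zero_of_mul hne
      have ha' : -u / 2 < v ∧ v < u / 2 := by by_contra h; simp [h] at ha
      have hb' : -u / 2 < t - v ∧ t - v < u / 2 := by by_contra h; simp [h] at hb
      exact hv ⟨max_lt ha'.1 (by linarith [hb'.2]), lt_min ha'.2 (by linarith [hb'.1])⟩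
  change ∫ v : ℝ, chi u v * chi u (t - v) = _
  rw [h1, integral_indicator measurableSet_Ioo, setIntegral_const, Real.volume_real_Ioo,
    smul_eq_mul, max_comm, mul_one_div]
  congr 2
  rcases le_total 0 t with h | h
  · rw [abs_of_nonneg h, max_eq_right (by linarith), min_eq_left (by linarith)]
    ring
  · rw [abs_of_nonpos h, max_eq_left (by linarith), min_eq_right (by linarith)]
    ring

lemma conv_chiPow_two {f : ℝ → ℝ} (hf : Continuous f) {u : ℝ} (hu : 0 < u) (t : ℝ) :
    conv f (chiPow u 2) t = (∫ s in (0 : ℝ)..u, (u - s) * (f (t + s) + f (t - s))) / u ^ 2 := by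
  set φ : ℝ → ℝ := fun s => f (t - s) * max 0 (u - |s|) with hφ
  have hφc : Continuous φ := by rw [hφ]; fun_prop
  have h1 : conv f (chiPow u 2) t = (∫ s, φ s) / u ^ 2 := by
    unfold conv
    simp only [chiPow_two hu]
    rw [← integral_div, ← integral_sub_left_eq_self (fun s => φ s / u ^ 2) volume t]
    simp only [hφ, sub_sub_cancel, mul_div_assoc]
  have hsupp : Function.support φ ⊆ Set.Ioc (-u) u := by
    intro s hs
    have h2 := right_ne_zero_of_mul hs
    have h3 : |s| < u := by
      by_contra h
      exact h2 (max_eq_left (by linarith))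
    exact ⟨(abs_lt.mp h3).1, (abs_lt.mp h3).2.le⟩
  rw [h1, ← intervalIntegral.integral_eq_integral_of_support_subset hsupp,
    ← intervalIntegral.integral_add_adjacent_intervals (hφc.intervalIntegrable (-u) 0)
      (hφc.intervalIntegrable 0 u)]
  have h4 := intervalIntegral.integral_comp_neg (a := 0) (b := u) φ
  rw [neg_zero] at h4
  rw [← h4, ← intervalIntegral.integral_add
    (Continuous.intervalIntegrable (by fun_prop) _ _) (hφc.intervalIntegrable _ _)]
  congr 1
  refine intervalIntegral.integral_congr fun s hs => ?_
  rw [Set.uIcc_of_le hu.le] at hs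
  simp only [hφ, abs_neg, sub_neg_eq_add, abs_of_nonneg hs.1,
    max_eq_right (sub_nonneg.mpr hs.2)]
  ring

lemma exists_primitive {f : ℝ → ℝ} (hf : Continuous f) :
    ∃ F : ℝ → ℝ, Continuous F ∧ ∀ x, HasDerivAt F (f x) x := by
  have h : ∀ x, HasDerivAt (fun y => ∫ t in (0 : ℝ)..y, f t) (f x) x := fun x =>
    intervalIntegral.integral_hasDerivAt_right (hf.intervalIntegrable _ _)
      (hf.stronglyMeasurableAtFilter _ _) hf.continuousAt
  exact ⟨_, continuous_iff_continuousAt.mpr fun x => (h x).continuousAt, h⟩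

/-- Symmetric Taylor formula: the second difference of a second primitive. -/
lemma second_difference {F F1 F2 : ℝ → ℝ} (hF : Continuous F) (h1 : ∀ x, HasDerivAt F1 (F x) x)
    (h2 : ∀ x, HasDerivAt F2 (F1 x) x) (t u : ℝ) :
    ∫ s in (0 : ℝ)..u, (u - s) * (F (t + s) + F (t - s)) = F2 (t + u) + F2 (t - u) - 2 * F2 t := by
  have hd : ∀ s ∈ Set.uIcc 0 u, HasDerivAt
      (fun s => (u - s) * (F1 (t + s) - F1 (t - s)) + (F2 (t + s) + F2 (t - s)))
      ((u - s) * (F (t + s) + F (t - s))) s := by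
    intro s _
    have hp : HasDerivAt (fun s => t + s) 1 s := by simpa using (hasDerivAt_id s).const_add t
    have hm : HasDerivAt (fun s => t - s) (-1) s := by simpa using (hasDerivAt_id s).const_sub t
    have hu : HasDerivAt (fun s => u - s) (-1) s := by simpa using (hasDerivAt_id s).const_sub u
    have a1 := (h1 (t + s)).comp s hp
    have a2 := (h1 (t - s)).comp s hm
    have a3 := (h2 (t + s)).comp s hp
    have a4 := (h2 (t - s)).comp s hm
    exact ((hu.mul (a1.sub a2)).add (a3.add a4)).congr_deriv (by simp; ring)
  rw [intervalIntegral.integral_eq_sub_of_hasDerivAt hd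
    (Continuous.intervalIntegrable (by fun_prop) _ _)]
  simp
  ring

lemma integral_weight (h : ℝ) : ∫ u in (0 : ℝ)..h, (h - u) * u ^ 2 = h ^ 4 / 12 := by
  have e : ∀ u : ℝ, (h - u) * u ^ 2 = h * u ^ 2 - u ^ 3 := fun u => by ring
  simp only [e]
  rw [intervalIntegral.integral_sub (Continuous.intervalIntegrable (by fun_prop) _ _)
    (Continuous.intervalIntegrable (by fun_prop) _ _), intervalIntegral.integral_const_mul,
    integral_pow, integral_pow]
  norm_num
  ring

lemma exists_bound {f : ℝ → ℝ} (hf : Continuous f) (hper : Function.Periodic f 1) :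
    ∃ C, ∀ t, |f t| ≤ C := by
  obtain ⟨C, hC⟩ := isCompact_Icc.exists_bound_of_continuousOn (s := Set.Icc (0 : ℝ) 1)
    hf.continuousOn
  refine ⟨C, fun t => ?_⟩
  obtain ⟨y, hy, hfy⟩ := hper.exists_mem_Ico₀ one_pos t
  rw [hfy]
  exact hC y ⟨hy.1, hy.2.le⟩

/-- The averages `f * χ_u²` keep the sup bound of `f`, so the suprema in `W2star` are finite. -/
lemma abs_sub_conv_le_W2star {f : ℝ → ℝ} (hf : Continuous f) (hper : Function.Periodic f 1)
    {h u : ℝ} (hu : u ∈ Set.Ioc 0 h) (t : ℝ) :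
    |f t - conv f (chiPow u 2) t| ≤ W2star f h 2 := by
  obtain ⟨C, hC⟩ := exists_bound hf hper
  have hb : ∀ v ∈ Set.Ioc 0 h, ∀ t, |f t - conv f (chiPow v 2) t| ≤ 2 * C := by
    intro v hv t
    have hv0 : 0 < v := hv.1
    have h1 : |conv f (chiPow v 2) t| ≤ C := by
      rw [conv_chiPow_two hf hv0, abs_div, abs_of_pos (by positivity : 0 < v ^ 2),
        div_le_iff₀ (by positivity)]
      calc |∫ s in (0 : ℝ)..v, (v - s) * (f (t + s) + f (t - s))|
          ≤ ∫ s in (0 : ℝ)..v, |(v - s) * (f (t + s) + f (t - s))| :=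
            intervalIntegral.abs_integral_le_integral_abs hv0.le
        _ ≤ ∫ s in (0 : ℝ)..v, (v - s) * (2 * C) := by
            refine intervalIntegral.integral_mono_on hv0.le
              (Continuous.intervalIntegrable (by fun_prop) _ _)
              (Continuous.intervalIntegrable (by fun_prop) _ _) fun s hs => ?_
            rw [abs_mul, abs_of_nonneg (sub_nonneg.mpr hs.2)]
            refine mul_le_mul_of_nonneg_left ?_ (sub_nonneg.mpr hs.2)
            linarith [abs_add_le (f (t + s)) (f (t - s)), hC (t + s), hC (t - s)]
        _ = C * v ^ 2 := by
            rw [intervalIntegral.integral_mul_const, intervalIntegral.integral_sub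
              (Continuous.intervalIntegrable (by fun_prop) _ _)
              (Continuous.intervalIntegrable (by fun_prop) _ _), integral_id,
              intervalIntegral.integral_const, smul_eq_mul]
            ring
    linarith [abs_sub (f t) (conv f (chiPow v 2) t), hC t]
  have h2 : |f t - conv f (chiPow u 2) t| ≤ W2 f u 2 :=
    le_ciSup (f := fun t => |f t - conv f (chiPow u 2) t|)
      ⟨2 * C, by rintro _ ⟨s, rfl⟩; exact hb u hu s⟩ t
  refine h2.trans (le_ciSup (f := fun v : Set.Ioc (0 : ℝ) h => W2 f v.1 2)
    ⟨2 * C, ?_⟩ ⟨u, hu⟩)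
  rintro _ ⟨v, rfl⟩
  exact ciSup_le fun s => hb v.1 v.2 s

/-! ### The Jackson-Stechkin inequality -/

/-- Theorem 3, inequality (4.1): `E_{n-1}(f) ≤ (1 + 3/(2α²))·W₂*(f, χ_{α/(2n)}²)`. -/
theorem stmt3 (f : ℝ → ℝ) (hf : Continuous f) (hper : Function.Periodic f 1)
    (α : ℝ) (hα : 0 < α) (n : ℕ) (hn : 1 ≤ n) :
    bestApprox n f ≤ (1 + 3 / (2 * α^2)) * W2star f (α / (2 * n)) 2 := by
  have hn0 : (0 : ℝ) < n := by positivity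
  set h : ℝ := α / (2 * n) with hh
  have hpos : 0 < h := by positivity
  set W := W2star f h 2 with hW
  obtain ⟨f1, hf1c, hf1⟩ := exists_primitive hf
  obtain ⟨f2, hf2c, hf2⟩ := exists_primitive hf1c
  obtain ⟨f3, hf3c, hf3⟩ := exists_primitive hf2c
  obtain ⟨f4, hf4c, hf4⟩ := exists_primitive hf3c
  -- `S u t` is `u² (f * χ_u²)(t)`
  set S : ℝ → ℝ → ℝ := fun u t => f2 (t + u) + f2 (t - u) - 2 * f2 t with hS
  have hSper : ∀ u, Function.Periodic (S u) 1 := by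
    intro u t
    simp only [hS]
    rw [← second_difference hf hf1 hf2, ← second_difference hf hf1 hf2]
    congr 1
    ext s
    rw [show t + 1 + s = t + s + 1 by ring, show t + 1 - s = t - s + 1 by ring, hper, hper]
  have hSW : ∀ u ∈ Set.Icc 0 h, ∀ t, |u ^ 2 * f t - S u t| ≤ u ^ 2 * W := by
    intro u hu t
    rcases hu.1.eq_or_lt with h0 | h0
    · simp only [hS, ← h0]; simp; linarith
    · have h1 := abs_sub_conv_le_W2star hf hper (h := h) ⟨h0, hu.2⟩ t
      rw [conv_chiPow_two hf h0, second_difference hf hf1 hf2] at h1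
      have e : u ^ 2 * f t - S u t = u ^ 2 * (f t - S u t / u ^ 2) := by field_simp
      rw [e, abs_mul, abs_of_nonneg (sq_nonneg u)]
      exact mul_le_mul_of_nonneg_left h1 (sq_nonneg u)
  -- the smoothing `g` and its second derivative `k`, written through primitives of `f`
  set g : ℝ → ℝ := fun t =>
    12 / h ^ 4 * (f4 (t + h) + f4 (t - h) - 2 * f4 t - h ^ 2 * f2 t) with hg
  set g1 : ℝ → ℝ := fun t =>
    12 / h ^ 4 * (f3 (t + h) + f3 (t - h) - 2 * f3 t - h ^ 2 * f1 t) with hg1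
  set k : ℝ → ℝ := fun t => 12 / h ^ 4 * (S h t - h ^ 2 * f t) with hk
  have hgd : ∀ x, HasDerivAt g (g1 x) x := fun x =>
    ((((hf4 (x + h)).comp_add_const x h).add ((hf4 (x - h)).comp_sub_const x h)).sub
      ((hf4 x).const_mul 2) |>.sub ((hf2 x).const_mul (h ^ 2))).const_mul _
  have hg1d : ∀ x, HasDerivAt g1 (k x) x := fun x =>
    ((((hf3 (x + h)).comp_add_const x h).add ((hf3 (x - h)).comp_sub_const x h)).sub
      ((hf3 x).const_mul 2) |>.sub ((hf1 x).const_mul (h ^ 2))).const_mul _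
  -- `f - g` is the average of `f - f * χ_u²` with density `12 h⁻⁴ u² (h - u)`
  have hfg : ∀ t, f t - g t = 12 / h ^ 4 * ∫ u in (0 : ℝ)..h, (h - u) * (u ^ 2 * f t - S u t) := by
    intro t
    have e : ∀ u, (h - u) * (u ^ 2 * f t - S u t) =
        (h - u) * u ^ 2 * f t - (h - u) * (f2 (t + u) + f2 (t - u)) + (h - u) * (2 * f2 t) := by
      intro u; simp only [hS]; ring
    simp only [e]
    rw [intervalIntegral.integral_add (Continuous.intervalIntegrable (by fun_prop) _ _)
      (Continuous.intervalIntegrable (by fun_prop) _ _), intervalIntegral.integral_sub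
      (Continuous.intervalIntegrable (by fun_prop) _ _)
      (Continuous.intervalIntegrable (by fun_prop) _ _), second_difference hf2c hf3 hf4,
      intervalIntegral.integral_mul_const, intervalIntegral.integral_mul_const, integral_weight,
      intervalIntegral.integral_sub (Continuous.intervalIntegrable (by fun_prop) _ _)
      (Continuous.intervalIntegrable (by fun_prop) _ _), integral_id,
      intervalIntegral.integral_const, smul_eq_mul]
    simp only [hg]
    field_simp
    ring
  have hgper : Function.Periodic g 1 := by
    intro t
    have h1 := hfg (t + 1)
    simp only [hper t, fun u => hSper u t] at h1
    linarith [hfg t]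
  have hkper : Function.Periodic k 1 := by
    intro t
    simp only [hk, hper t, hSper h t]
  have hkc : Continuous k := by simp only [hk, hS]; fun_prop
  have hkM : ∀ x, |k x| ≤ 12 / h ^ 2 * W := by
    intro x
    have h1 := hSW h ⟨hpos.le, le_rfl⟩ x
    simp only [hk]
    rw [abs_mul, abs_of_pos (by positivity : 0 < 12 / h ^ 4), abs_sub_comm]
    calc 12 / h ^ 4 * |h ^ 2 * f x - S h x| ≤ 12 / h ^ 4 * (h ^ 2 * W) := by gcongr
      _ = 12 / h ^ 2 * W := by field_simp
  have hfgW : ∀ t, |f t - g t| ≤ W := by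
    intro t
    have hSc : Continuous fun u => S u t := by simp only [hS]; fun_prop
    rw [hfg, abs_mul, abs_of_pos (by positivity : 0 < 12 / h ^ 4)]
    calc 12 / h ^ 4 * |∫ u in (0 : ℝ)..h, (h - u) * (u ^ 2 * f t - S u t)|
        ≤ 12 / h ^ 4 * ∫ u in (0 : ℝ)..h, |(h - u) * (u ^ 2 * f t - S u t)| := by
          gcongr
          exact intervalIntegral.abs_integral_le_integral_abs hpos.le
      _ ≤ 12 / h ^ 4 * ∫ u in (0 : ℝ)..h, (h - u) * u ^ 2 * W := by
          gcongr
          refine intervalIntegral.integral_mono_on hpos.le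
            (Continuous.intervalIntegrable (by fun_prop) _ _)
            (Continuous.intervalIntegrable (by fun_prop) _ _) fun u hu => ?_
          rw [abs_mul, abs_of_nonneg (sub_nonneg.mpr hu.2), mul_assoc]
          exact mul_le_mul_of_nonneg_left (hSW u hu t) (sub_nonneg.mpr hu.2)
      _ = W := by
          rw [intervalIntegral.integral_mul_const, integral_weight]
          field_simp
  obtain ⟨τ, hτ, hτb⟩ := favard hn hgd hg1d hkc hgper hkper hkM
  have hbest : bestApprox n f ≤ unorm fun t => f t - τ t := by
    refine ciInf_le (f := fun τ : {τ : ℝ → ℝ // IsTrigPolyDegLT n τ} =>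
      unorm fun t => f t - τ.1 t) ⟨0, ?_⟩ ⟨τ, hτ⟩
    rintro _ ⟨σ, rfl⟩
    exact Real.iSup_nonneg fun _ => abs_nonneg _
  refine hbest.trans (ciSup_le fun t => ?_)
  have hsum := abs_add_le (f t - g t) (g t - τ t)
  rw [sub_add_sub_cancel] at hsum
  have hconst : 12 / h ^ 2 * W / (32 * n ^ 2) = 3 / (2 * α ^ 2) * W := by
    rw [hh]; field_simp; ring
  linarith [hfgW t, hτb t]
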